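/- arXiv:1909.10766 — 2 statements merged into one kernel-verified Lean document; each statement's English description precedes it below -/
import Mathlib

section
/- For all real numbers α, β with 0 ≤ β ≤ α ≤ 1 and β < 1, we have arccos β − arccos α ≤ (π/2)·(α − β)/√(1 − β). -/
/-- for `0 ≤ β ≤ α ≤ 1` with `β < 1`,
`arccos β − arccos α ≤ (π/2)·(α − β)/√(1 − β)`. -/
theorem arccos_diff_bound (α β : ℝ) (hβ0 : 0 ≤ β) (hβα : β ≤ α) (hα1 : α ≤ 1)
    (hβ1 : β < 1) :
    Real.arccos β - Real.arccos α ≤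
      Real.pi / 2 * (α - β) / Real.sqrt (1 - β) := by
  have hpi := Real.pi_pos
  have hca : Real.cos (Real.arccos α) = α := Real.cos_arccos (by linarith) hα1
  have hcb : Real.cos (Real.arccos β) = β := Real.cos_arccos (by linarith) hβ1.le
  have ha0 := Real.arccos_nonneg α
  have hb0 : 0 < Real.arccos β := Real.arccos_pos.2 hβ1
  have hb2 : Real.arccos β ≤ Real.pi / 2 := Real.arccos_le_pi_div_two.2 hβ0
  have hab : Real.arccos α ≤ Real.arccos β := Real.arccos_le_arccos hβα
  generalize Real.arccos α = a at *
  generalize Real.arccos β = b at *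
  -- chord bound from concavity of cos
  have h1 : (b - a) * (1 - β) ≤ b * (α - β) := by
    have h := strictConcaveOn_cos_Icc.concaveOn.2
      (show (0:ℝ) ∈ Set.Icc (-(Real.pi/2)) (Real.pi/2) from ⟨by linarith, by linarith⟩)
      (show b ∈ Set.Icc (-(Real.pi/2)) (Real.pi/2) from ⟨by linarith, by linarith⟩)
      (show 0 ≤ (b - a) / b from div_nonneg (by linarith) hb0.le)
      (show 0 ≤ a / b from div_nonneg ha0 hb0.le) (by field_simp; ring)
    simp only [smul_eq_mul, Real.cos_zero, mul_zero, zero_add, mul_one] at h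
    rw [div_mul_cancel₀ _ hb0.ne', hca, hcb] at h
    have h' := mul_le_mul_of_nonneg_left h hb0.le
    have e : b * ((b - a) / b + a / b * β) = (b - a) + a * β := by field_simp
    rw [e] at h'
    nlinarith
  -- lower bound for sin on [0, π/4]
  have h2 : 2 * b / Real.pi * (√2 / 2) ≤ Real.sin (b / 2) := by
    have h := strictConcaveOn_sin_Icc.concaveOn.2
      (show (0:ℝ) ∈ Set.Icc 0 Real.pi from ⟨le_rfl, by linarith⟩)
      (show Real.pi / 4 ∈ Set.Icc 0 Real.pi from ⟨by linarith, by linarith⟩)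
      (show 0 ≤ 1 - 2 * b / Real.pi by
        rw [sub_nonneg, div_le_one hpi]; linarith)
      (show 0 ≤ 2 * b / Real.pi by positivity) (by ring)
    simp only [smul_eq_mul, Real.sin_zero, mul_zero, zero_add, Real.sin_pi_div_four] at h
    have e : 2 * b / Real.pi * (Real.pi / 4) = b / 2 := by field_simp; norm_num
    rwa [e] at h
  have h3 : (2 * b / Real.pi) ^ 2 ≤ 1 - β := by
    have hs := pow_le_pow_left₀ (by positivity) h2 2
    have e : β = 1 - 2 * Real.sin (b / 2) ^ 2 := by
      rw [← hcb]
      have := Real.cos_sq' (b / 2)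
      have h4 := Real.cos_two_mul (b / 2)
      rw [show 2 * (b / 2) = b by ring] at h4
      linarith
    rw [mul_pow, div_pow (√2), Real.sq_sqrt (by norm_num)] at hs
    linarith
  have h5 : b ≤ Real.pi / 2 * √(1 - β) := by
    have := Real.le_sqrt_of_sq_le h3
    rw [div_le_iff₀ hpi] at this
    linarith
  have hs : 0 < √(1 - β) := Real.sqrt_pos.2 (by linarith)
  have hss : √(1 - β) * √(1 - β) = 1 - β := Real.mul_self_sqrt (by linarith)
  rw [le_div_iff₀ hs]
  have h6 := mul_le_mul_of_nonneg_right h5 (sub_nonneg.2 hβα)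
  refine le_of_mul_le_mul_right ?_ hs
  calc (b - a) * √(1 - β) * √(1 - β) = (b - a) * (1 - β) := by rw [mul_assoc, hss]
    _ ≤ _ := h1
    _ ≤ _ := h6
    _ = _ := by ring
end

section
/- For every real number β ∈ [0, 1], we have arccos β ≤ (π/2)·√(1 − β). -/
/-- for every `β ∈ [0, 1]`, `arccos β ≤ (π/2)·√(1 − β)`. -/
theorem arccos_le (β : ℝ) (hβ0 : 0 ≤ β) (hβ1 : β ≤ 1) :
    Real.arccos β ≤ Real.pi / 2 * Real.sqrt (1 - β) := by
  have hpi := Real.pi_pos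
  obtain ⟨t, ht⟩ : ∃ t, t = 2 * Real.arccos β / Real.pi := ⟨_, rfl⟩
  have hθ : Real.arccos β = Real.pi / 2 * t := by rw [ht]; field_simp
  have h0 : 0 ≤ t := by
    rw [ht]
    have := Real.arccos_nonneg β
    positivity
  have h1 : t ≤ 1 := by
    have h := Real.arccos_le_pi_div_two.2 hβ0
    rw [ht, div_le_one hpi]
    linarith
  have hcos : Real.cos (Real.pi / 2 * t) = β := by
    rw [← hθ]
    exact Real.cos_arccos (by linarith) hβ1
  -- concavity of sine on the chord from `0` to `π / 4`
  have hc := strictConcaveOn_sin_Icc.concaveOn.2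
    (show (0 : ℝ) ∈ Set.Icc 0 Real.pi from ⟨le_rfl, hpi.le⟩)
    (show Real.pi / 4 ∈ Set.Icc 0 Real.pi from ⟨by positivity, by linarith⟩)
    (sub_nonneg.2 h1) h0 (by ring)
  simp only [smul_eq_mul, Real.sin_zero, mul_zero, zero_add, Real.sin_pi_div_four] at hc
  have hsq : (t * (Real.sqrt 2 / 2)) ^ 2 ≤ Real.sin (t * (Real.pi / 4)) ^ 2 :=
    pow_le_pow_left₀ (by positivity) hc 2
  have h2 : Real.sqrt 2 ^ 2 = 2 := Real.sq_sqrt (by norm_num)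
  have hd : β = 2 * Real.cos (t * (Real.pi / 4)) ^ 2 - 1 := by
    rw [← hcos, ← Real.cos_two_mul]
    congr 1
    ring
  have hs := Real.sin_sq_add_cos_sq (t * (Real.pi / 4))
  have hexp : (t * (Real.sqrt 2 / 2)) ^ 2 = t ^ 2 / 2 := by
    rw [mul_pow, div_pow, h2]
    ring
  rw [hθ]
  gcongr
  apply Real.le_sqrt_of_sq_le
  linarith
end
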